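/- Let X be a metric space, μ an Ahlfors s-regular measure on X for some s ∈ (0,∞), 0 ≤ r ≤ 1 and 0 < q < ∞ with rq ≤ s, (Y,ρ) a metric space, and u ∈ B^r_{q,∞}(X,μ;Y). For α ∈ [0,∞) define D_α := { x ∈ X : limsup_{ε→0⁺} |ln ε|^α ⨍_{B_ε(x)} ⨍_{B_ε(x)} ρ(u(z),u(y))^q dμ(z) dμ(y) > 0 }. Then D_α = { x ∈ X : limsup_{n→∞} n^α ⨍_{B_{e^{−n}}(x)} ⨍_{B_{e^{−n}}(x)} ρ(u(z),u(y))^q dμ(z) dμ(y) > 0 }, and if β > 1 + α then Λ^{s−rq,β}(D_α) = 0. In particular, the Hausdorff dimension of D_α is at most s − rq. -/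

import Mathlib

open MeasureTheory Metric Filter Set
open scoped ENNReal Topology

/-- A Borel measure `μ` on a metric space is Ahlfors `s`-regular. -/
def IsAhlfors {X : Type*} [MetricSpace X] [MeasurableSpace X]
    (μ : Measure X) (s : ℝ) : Prop :=
  ∃ c C : ℝ, 0 < c ∧ 0 < C ∧ ∀ (x : X) (ρ : ℝ), 0 < ρ →
    ENNReal.ofReal ρ < EMetric.diam (Set.univ : Set X) →
    ENNReal.ofReal (c * ρ ^ s) ≤ μ (closedBall x ρ) ∧
      μ (closedBall x ρ) ≤ ENNReal.ofReal (C * ρ ^ s)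

/-- `u ∈ B^r_{q,∞}(X,μ;Y)`. -/
def MemBesov {X Y : Type*} [MetricSpace X] [MeasurableSpace X] [MetricSpace Y]
    [MeasurableSpace Y] [BorelSpace Y]
    (μ : Measure X) (r q : ℝ) (u : X → Y) : Prop :=
  Measurable u ∧
  (∀ (x : X) (R : ℝ), 0 < R →
    ∫⁻ z in closedBall x R, ∫⁻ y in closedBall x R, edist (u z) (u y) ^ q ∂μ ∂μ < ⊤) ∧
  (⨆ (t : ℝ) (_ : 0 < t),
    ∫⁻ x, (ENNReal.ofReal t ^ (r * q))⁻¹ *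
      ((μ (closedBall x t))⁻¹ * ∫⁻ z in closedBall x t, edist (u x) (u z) ^ q ∂μ) ∂μ) < ⊤

/-- The double average `⨍_{B_ε(x)} ⨍_{B_ε(x)} W(z,y) dμ(z) dμ(y)`. -/
noncomputable def doubleAvg {X : Type*} [MetricSpace X] [MeasurableSpace X]
    (μ : Measure X) (W : X → X → ℝ≥0∞) (x : X) (ε : ℝ) : ℝ≥0∞ :=
  (μ (closedBall x ε))⁻¹ * (μ (closedBall x ε))⁻¹ *
    ∫⁻ z in closedBall x ε, ∫⁻ y in closedBall x ε, W z y ∂μ ∂μ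

/-- The gauge function `g_{s,β}` on `[0,∞]`. -/
noncomputable def glogE (s β : ℝ) (r : ℝ≥0∞) : ℝ≥0∞ :=
  if r = 0 then 0 else if r = 1 then ⊤ else if r = ⊤ then ⊤
  else ENNReal.ofReal (r.toReal ^ s / |Real.log r.toReal| ^ β)

/-- The `s`-dimensional logarithmic Hausdorff measure with decreasing factor `β`. -/
noncomputable def logHausdorff {X : Type*} [MetricSpace X]
    (s β : ℝ) (E : Set X) : ℝ≥0∞ :=
  ⨆ (δ : ℝ) (_ : 0 < δ),
    ⨅ (t : ℕ → Set X) (_ : E ⊆ ⋃ n, t n)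
      (_ : ∀ n, EMetric.diam (t n) ≤ ENNReal.ofReal δ),
      ∑' n, glogE s β (EMetric.diam (t n))

/-!
Ahlfors regularity is a doubling condition at small scales, so up to a constant the double average
over `B_ε(x)` is controlled by that over `B_{e⁻ⁿ}(x)` with `n = ⌊-log ε⌋`; this gives the sequential
description of `D_α`.

Write `p = s - rq`. For `z ∈ B_ε(x)` the ball `B_ε(x)` lies in `B_{2ε}(z)`, so the sum of the double
averages over disjoint balls of radius `ε` is at most `ε⁻ˢ` times the Besov integral at scale `2ε`,
hence `O(ε⁻ᵖ)`. By Chebyshev's inequality, for `η > 0` the set of points where `n^α` times the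
double average at scale `e⁻ⁿ` is at least `η` is covered by `O(n^α e^{pn} / η)` balls of radius
`2e⁻ⁿ`. The gauge of each is `O(e^{-pn} n^{-β})`, so the cover at scale `n` costs `O(n^{α-β} / η)`,
which is summable for `β > 1 + α`, and a Borel–Cantelli argument shows that `D_α` is null. Finally,
`r^d` is dominated by the gauge near `0` for every `d > p`, which bounds the dimension.
-/

open scoped NNReal

section Gauge

variable {p β : ℝ}

lemma glogE_of_lt_one {d : ℝ≥0∞} (h0 : d ≠ 0) (h1 : d < 1) :
    glogE p β d = ENNReal.ofReal (d.toReal ^ p / |Real.log d.toReal| ^ β) := by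
  rw [glogE, if_neg h0, if_neg h1.ne, if_neg (h1.trans ENNReal.one_lt_top).ne]

lemma glogE_le_glogE {d d' : ℝ≥0∞} (hp : 0 ≤ p) (hβ : 0 ≤ β) (hd : d ≤ d') (hd' : d' < 1) :
    glogE p β d ≤ glogE p β d' := by
  rcases eq_or_ne d 0 with rfl | h0
  · simp [glogE]
  have hd'0 : d' ≠ 0 := (pos_of_ne_zero h0 |>.trans_le hd).ne'
  have hd'top : d' ≠ ⊤ := (hd'.trans ENNReal.one_lt_top).ne
  rw [glogE_of_lt_one h0 (hd.trans_lt hd'), glogE_of_lt_one hd'0 hd']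
  have hpos : 0 < d.toReal := ENNReal.toReal_pos h0 (ne_top_of_le_ne_top hd'top hd)
  have hle : d.toReal ≤ d'.toReal := ENNReal.toReal_mono hd'top hd
  have hlog_neg : Real.log d'.toReal < 0 :=
    Real.log_neg (hpos.trans_le hle) (by simpa using ENNReal.toReal_strict_mono (by simp) hd')
  have hlog_le : |Real.log d'.toReal| ≤ |Real.log d.toReal| :=
    abs_le_abs_of_nonpos hlog_neg.le (Real.log_le_log hpos hle)
  have hlog_pos : 0 < |Real.log d'.toReal| := abs_pos.2 hlog_neg.ne
  gcongr

lemma eventually_rpow_le_rpow_div_abs_log_rpow {d : ℝ} (hpd : p < d) :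
    ∀ᶠ t in 𝓝[>] (0 : ℝ), t ^ d ≤ t ^ p / |Real.log t| ^ β := by
  have hlog := (isLittleO_abs_log_rpow_rpow_nhdsGT_zero β (sub_neg.2 hpd)).bound one_pos
  filter_upwards [hlog, Ioo_mem_nhdsGT one_pos] with t ht ⟨ht0, ht1⟩
  have hlog_pos : 0 < |Real.log t| := abs_pos.2 (Real.log_neg ht0 ht1).ne
  rw [one_mul, Real.norm_of_nonneg (by positivity), Real.norm_of_nonneg (by positivity)] at ht
  rw [le_div_iff₀ (by positivity)]
  calc t ^ d * |Real.log t| ^ β ≤ t ^ d * t ^ (p - d) := by gcongr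
    _ = t ^ p := by rw [← Real.rpow_add ht0, add_sub_cancel]

lemma eventually_rpow_le_glogE {d : ℝ} (hd : 0 < d) (hpd : p < d) :
    ∀ᶠ x : ℝ≥0∞ in 𝓝 0, x ^ d ≤ glogE p β x := by
  have htoReal : Tendsto ENNReal.toReal (𝓝[≠] 0) (𝓝[>] 0) := by
    refine tendsto_nhdsWithin_iff.2
      ⟨(ENNReal.tendsto_toReal ENNReal.zero_ne_top).mono_left nhdsWithin_le_nhds, ?_⟩
    filter_upwards [self_mem_nhdsWithin,
      mem_nhdsWithin_of_mem_nhds (Iio_mem_nhds ENNReal.zero_lt_top)] with x hx0 hxtop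
    exact ENNReal.toReal_pos hx0 hxtop.ne
  filter_upwards [eventually_nhdsWithin_iff.1
      (htoReal.eventually (eventually_rpow_le_rpow_div_abs_log_rpow (β := β) hpd)),
    Iio_mem_nhds zero_lt_one] with x hx hx1
  rcases eq_or_ne x 0 with rfl | h0
  · simp [ENNReal.zero_rpow_of_pos hd]
  have hxtop : x ≠ ⊤ := (mem_Iio.1 hx1 |>.trans ENNReal.one_lt_top).ne
  rw [glogE_of_lt_one h0 hx1]
  calc x ^ d = ENNReal.ofReal (x.toReal ^ d) := by
        rw [← ENNReal.ofReal_rpow_of_pos (ENNReal.toReal_pos h0 hxtop), ENNReal.ofReal_toReal hxtop]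
    _ ≤ _ := ENNReal.ofReal_le_ofReal (hx h0)

variable {X : Type*} [MetricSpace X] [MeasurableSpace X] [BorelSpace X]

lemma logHausdorff_le_mkMetric (E : Set X) :
    logHausdorff p β E ≤ Measure.mkMetric (glogE p β) E := by
  rw [Measure.mkMetric_apply, logHausdorff]
  refine iSup₂_le fun δ hδ ↦ le_iSup₂_of_le (ENNReal.ofReal δ) (ENNReal.ofReal_pos.2 hδ) ?_
  refine iInf_mono fun t ↦ iInf_mono fun _ ↦ iInf_mono fun _ ↦ ENNReal.tsum_le_tsum fun n ↦ ?_
  rcases (t n).eq_empty_or_nonempty with h | h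
  · have hgauge : glogE p β (ediam (t n)) = 0 := by simp [h, glogE]
    exact hgauge.trans_le zero_le
  · exact le_iSup_of_le h le_rfl

lemma dimH_le_of_mkMetric_glogE_eq_zero (hp : 0 ≤ p) {E : Set X}
    (hE : Measure.mkMetric (glogE p β) E = 0) : dimH E ≤ ENNReal.ofReal p := by
  refine dimH_le fun d hd ↦ ?_
  by_contra! hpd
  have hpd : p < d := (ENNReal.ofReal_lt_ofReal_iff_of_nonneg hp).1 (by simpa using hpd)
  have hle := Measure.mkMetric_mono (X := X)
    (eventually_rpow_le_glogE (β := β) (hp.trans_lt hpd) hpd) E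
  change Measure.hausdorffMeasure (d : ℝ) E ≤ _ at hle
  simp [hd, hE] at hle

end Gauge

section HausdorffCantelli

variable {X : Type*} [EMetricSpace X] [MeasurableSpace X] [BorelSpace X] {m : ℝ≥0∞ → ℝ≥0∞}

lemma mkMetric_limsup_cofinite_eq_zero {ι : Type*} [Countable ι] {t : ι → Set X}
    (ht : Tendsto (fun i ↦ ediam (t i)) cofinite (𝓝 0)) (hsum : ∑' i, m (ediam (t i)) ≠ ⊤) :
    Measure.mkMetric m (limsup t cofinite) = 0 := by
  have hdiam : Tendsto (fun S : Finset ι ↦ ⨆ i : {i // i ∉ S}, ediam (t i)) atTop (𝓝 0) := by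
    refine ENNReal.tendsto_nhds_zero.2 fun ε hε ↦ ?_
    have hfin : {i | ¬ ediam (t i) ≤ ε}.Finite := ENNReal.tendsto_nhds_zero.1 ht ε hε
    filter_upwards [eventually_ge_atTop hfin.toFinset] with S hS
    refine iSup_le fun i ↦ by_contra fun hi ↦ i.2 (hS (hfin.mem_toFinset.2 hi))
  have hcover (S : Finset ι) : limsup t cofinite ⊆ ⋃ i : {i // i ∉ S}, t i := by
    intro x hx
    obtain ⟨i, hxi, hiS⟩ := ((mem_limsup_iff_frequently_mem.1 hx).and_eventually
      S.finite_toSet.eventually_cofinite_notMem).exists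
    exact mem_iUnion.2 ⟨⟨i, hiS⟩, hxi⟩
  have hle := Measure.mkMetric_le_liminf_tsum (limsup t cofinite) _ hdiam
    (fun S (i : {i // i ∉ S}) ↦ t i)
    (.of_forall fun S i ↦ le_iSup (fun i : {i // i ∉ S} ↦ ediam (t i)) i) (.of_forall hcover) m
  rw [(ENNReal.tendsto_tsum_compl_atTop_zero hsum).liminf_eq] at hle
  exact le_antisymm hle zero_le

lemma mkMetric_eq_zero_of_subsingleton (hm : m 0 = 0) {E : Set X} (hE : E.Subsingleton) :
    Measure.mkMetric m E = 0 := by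
  have hdiam : ediam E = 0 := ediam_subsingleton hE
  simpa using mkMetric_limsup_cofinite_eq_zero (m := m) (t := fun _ : ℕ ↦ E)
    (by simp [hdiam]) (by simp [hdiam, hm])

lemma mkMetric_limsup_eq_zero_of_eventually_isCover {U : ℕ → Set X} {ρ : ℕ → ℝ≥0}
    {b : ℕ → ℝ≥0∞} (hρ : Tendsto ρ atTop (𝓝 0)) (hb : ∑' n, b n ≠ ⊤)
    (hU : ∀ᶠ n in atTop, ∃ F : Finset X, IsCover (ρ n) (U n) F ∧
      ∑ y ∈ F, m (ediam (closedEBall y (ρ n))) ≤ b n) :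
    Measure.mkMetric m (limsup U atTop) = 0 := by
  obtain ⟨N, hN⟩ := eventually_atTop.1 hU
  choose! F hcover hsum using hN
  let t (i : Σ n, F (n + N)) : Set X := closedEBall i.2 (ρ (i.1 + N))
  have hfst : Tendsto (Sigma.fst : (Σ n, F (n + N)) → ℕ) cofinite cofinite :=
    .cofinite_of_finite_preimage_singleton fun n ↦ by
      rw [← Set.range_sigmaMk]
      exact finite_range _
  have hdiam : Tendsto (fun i ↦ ediam (t i)) cofinite (𝓝 0) := by
    rw [Nat.cofinite_eq_atTop] at hfst
    have hρN : Tendsto (fun n ↦ 2 * (ρ (n + N) : ℝ≥0∞)) atTop (𝓝 0) := by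
      simpa using ENNReal.Tendsto.const_mul
        (ENNReal.tendsto_coe.2 (hρ.comp (tendsto_add_atTop_nat N))) (.inr ENNReal.ofNat_ne_top)
    exact tendsto_of_tendsto_of_tendsto_of_le_of_le tendsto_const_nhds (hρN.comp hfst)
      (fun _ ↦ zero_le) fun _ ↦ ediam_closedEBall_le
  have htsum : ∑' i, m (ediam (t i)) ≠ ⊤ := by
    refine ne_top_of_le_ne_top hb ?_
    calc ∑' i, m (ediam (t i))
        = ∑' n, ∑ y ∈ F (n + N), m (ediam (closedEBall y (ρ (n + N)))) := by
          rw [ENNReal.tsum_sigma']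
          exact tsum_congr fun n ↦
            Finset.tsum_subtype (F (n + N)) fun y ↦ m (ediam (closedEBall y (ρ (n + N))))
      _ ≤ ∑' n, b (n + N) := ENNReal.tsum_le_tsum fun n ↦ hsum _ (Nat.le_add_left N n)
      _ ≤ ∑' n, b n := ENNReal.tsum_comp_le_tsum_of_injective (add_left_injective N) b
  refine measure_mono_null (fun x hx ↦ ?_) (mkMetric_limsup_cofinite_eq_zero hdiam htsum)
  rw [← limsup_nat_add U N, mem_limsup_iff_frequently_mem, Nat.frequently_atTop_iff_infinite] at hx
  rw [mem_limsup_iff_frequently_mem, frequently_cofinite_iff_infinite]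
  refine .of_image Sigma.fst (hx.mono fun n hn ↦ ?_)
  obtain ⟨y, hy, hxy⟩ := hcover (n + N) (Nat.le_add_left N n) hn
  exact ⟨⟨n, y, hy⟩, hxy, rfl⟩

end HausdorffCantelli

section Packing

lemma packingNumber_mul_le {X : Type*} [PseudoEMetricSpace X] {a : X → ℝ≥0∞} {δ : ℝ≥0}
    {B η : ℝ≥0∞} (h : ∀ F : Finset X, IsSeparated δ (F : Set X) → ∑ x ∈ F, a x ≤ B) :
    (packingNumber δ {x | η ≤ a x} : ℝ≥0∞) * η ≤ B := by
  simp only [packingNumber, ENat.toENNReal_iSup, ENNReal.iSup_mul, iSup_le_iff]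
  intro C hC hsep
  calc (C.encard : ℝ≥0∞) * η = ∑' _ : C, η := (ENNReal.tsum_set_const C η).symm
    _ ≤ ∑' x : C, a x := ENNReal.tsum_le_tsum fun x ↦ hC x.2
    _ ≤ B := ENNReal.summable.tsum_le_of_sum_le fun F ↦ by
      simpa using h (F.map (.subtype _)) (hsep.mono (by simp))

lemma exists_finset_isCover_card_le_div {X : Type*} [PseudoEMetricSpace X] {a : X → ℝ≥0∞}
    {δ : ℝ≥0} {B η : ℝ≥0∞} (hB : B ≠ ⊤) (hη : η ≠ 0)
    (h : ∀ F : Finset X, IsSeparated δ (F : Set X) → ∑ x ∈ F, a x ≤ B) :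
    ∃ F : Finset X, IsCover δ {x | η ≤ a x} F ∧ (F.card : ℝ≥0∞) ≤ B / η := by
  have hle : (packingNumber δ {x | η ≤ a x} : ℝ≥0∞) ≤ B / η :=
    (ENNReal.le_div_iff_mul_le (.inl hη) (.inr hB)).2 (packingNumber_mul_le h)
  have hfin : packingNumber δ {x | η ≤ a x} ≠ ⊤ :=
    ENat.toENNReal_ne_top.1 (ne_top_of_le_ne_top (ENNReal.div_ne_top hB hη) hle)
  have hcard := encard_maximalSeparatedSet hfin
  obtain ⟨F, hF⟩ := (encard_ne_top_iff.1 (hcard.trans_ne hfin)).exists_finset_coe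
  rw [← hF, encard_coe_eq_coe_finsetCard] at hcard
  refine ⟨F, hF ▸ isCover_maximalSeparatedSet hfin, ?_⟩
  rwa [← hcard] at hle

end Packing

section PackingGrowth

lemma setOf_limsup_pos_subset_iUnion_limsup {X : Type*} (f : ℕ → X → ℝ≥0∞) :
    {x | 0 < limsup (f · x) atTop} ⊆
      ⋃ k : ℕ, limsup (fun n ↦ {x | (k : ℝ≥0∞)⁻¹ ≤ f n x}) atTop := by
  intro x hx
  obtain ⟨k, hk⟩ := ENNReal.exists_inv_nat_lt (pos_iff_ne_zero.1 hx)
  refine mem_iUnion.2 ⟨k, mem_limsup_iff_frequently_mem.2 ?_⟩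
  exact (frequently_lt_of_lt_limsup (by isBoundedDefault) hk).mono fun n hn ↦ hn.le

lemma tendsto_exp_neg_natCast_nhdsGT_zero :
    Tendsto (fun n : ℕ ↦ Real.exp (-(n : ℝ))) atTop (𝓝[>] 0) :=
  Real.tendsto_exp_atBot_nhdsGT.comp (tendsto_neg_atTop_atBot.comp tendsto_natCast_atTop_atTop)

lemma eventually_glogE_le_of_le_ofReal_mul_exp_neg {a p β : ℝ} (ha : 0 < a) (hp : 0 ≤ p)
    (hβ : 0 ≤ β) :
    ∀ᶠ n : ℕ in atTop, ∀ d ≤ ENNReal.ofReal (a * Real.exp (-(n : ℝ))), glogE p β d ≤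
      ENNReal.ofReal (a ^ p * 2 ^ β * (Real.exp (-(n : ℝ)) ^ p * (n : ℝ) ^ (-β))) := by
  filter_upwards [tendsto_natCast_atTop_atTop.eventually_gt_atTop (2 * Real.log a),
    eventually_gt_atTop 0] with n hna hn0 d hd
  have hn : (0 : ℝ) < n := Nat.cast_pos.2 hn0
  set ε := Real.exp (-(n : ℝ)) with hε
  have hε0 : 0 < ε := Real.exp_pos _
  have hlog : Real.log (a * ε) = Real.log a - n := by
    rw [Real.log_mul ha.ne' hε0.ne', hε, Real.log_exp, sub_eq_add_neg]
  have hlt : a * ε < 1 := by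
    rw [← Real.log_neg_iff (by positivity), hlog]
    linarith
  have hlt' : ENNReal.ofReal (a * ε) < 1 := ENNReal.ofReal_lt_one.2 hlt
  have habs : (n : ℝ) / 2 ≤ |Real.log (a * ε)| := by
    rw [hlog, abs_of_neg (by linarith)]
    linarith
  refine (glogE_le_glogE hp hβ hd hlt').trans ?_
  rw [glogE_of_lt_one (ENNReal.ofReal_pos.2 (by positivity)).ne' hlt',
    ENNReal.toReal_ofReal (by positivity)]
  refine ENNReal.ofReal_le_ofReal ?_
  calc (a * ε) ^ p / |Real.log (a * ε)| ^ β ≤ (a * ε) ^ p / ((n : ℝ) / 2) ^ β := by gcongr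
    _ = a ^ p * 2 ^ β * (ε ^ p * (n : ℝ) ^ (-β)) := by
      rw [Real.mul_rpow ha.le hε0.le, Real.div_rpow hn.le two_pos.le, Real.rpow_neg hn.le]
      field_simp

variable {X : Type*} [MetricSpace X] {A : X → ℝ → ℝ≥0∞} {p : ℝ}

/-- The sums of `A x ε` over `2ε`-separated finite sets of centres `x` are `O(ε ^ (-p))` as
`ε → 0⁺`. For `A x ε` a mass of the ball `closedBall x ε` this says that disjoint balls of radius
`ε` carry total mass at most of order `ε ^ (-p)`. -/
def HasPackingGrowth (A : X → ℝ → ℝ≥0∞) (p : ℝ) : Prop :=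
  ∃ K : ℝ≥0∞, K ≠ ⊤ ∧ ∀ᶠ ε in 𝓝[>] (0 : ℝ), ∀ F : Finset X,
    IsSeparated (ENNReal.ofReal (2 * ε)) (F : Set X) →
      ∑ x ∈ F, A x ε ≤ K * ENNReal.ofReal (ε ^ (-p))

lemma HasPackingGrowth.eventually_exists_finset_isCover_card_le (hA : HasPackingGrowth A p) :
    ∃ K : ℝ≥0∞, K ≠ ⊤ ∧ ∀ᶠ ε in 𝓝[>] (0 : ℝ), ∀ w η : ℝ≥0∞, w ≠ ⊤ → η ≠ 0 → ∃ F : Finset X,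
      IsCover (2 * ε).toNNReal {x | η ≤ w * A x ε} F ∧
        (F.card : ℝ≥0∞) ≤ w * (K * ENNReal.ofReal (ε ^ (-p))) / η := by
  obtain ⟨K, hK, hsum⟩ := hA
  refine ⟨K, hK, hsum.mono fun ε hsum w η hw hη ↦
    exists_finset_isCover_card_le_div (by finiteness) hη fun F hF ↦ ?_⟩
  rw [← Finset.mul_sum]
  gcongr
  exact hsum F hF

lemma HasPackingGrowth.eventually_exists_finset_isCover_sum_glogE_le (hA : HasPackingGrowth A p)
    (hp : 0 ≤ p) {α β : ℝ} (hβ : 0 ≤ β) {η : ℝ≥0∞} (hη : η ≠ 0) :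
    ∃ K : ℝ≥0∞, K ≠ ⊤ ∧ ∀ᶠ n : ℕ in atTop, ∃ F : Finset X,
      IsCover (2 * Real.exp (-(n : ℝ))).toNNReal
        {x | η ≤ ENNReal.ofReal ((n : ℝ) ^ α) * A x (Real.exp (-(n : ℝ)))} F ∧
      ∑ y ∈ F, glogE p β (ediam (closedEBall y ((2 * Real.exp (-(n : ℝ))).toNNReal))) ≤
        K * ENNReal.ofReal ((n : ℝ) ^ (α - β)) := by
  obtain ⟨K, hK, hcover⟩ := hA.eventually_exists_finset_isCover_card_le
  refine ⟨K * η⁻¹ * ENNReal.ofReal (4 ^ p * 2 ^ β), by finiteness, ?_⟩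
  filter_upwards [tendsto_exp_neg_natCast_nhdsGT_zero.eventually hcover,
    eventually_glogE_le_of_le_ofReal_mul_exp_neg four_pos hp hβ, eventually_gt_atTop 0]
    with n hcover hgauge hn0
  have hn : (0 : ℝ) < n := Nat.cast_pos.2 hn0
  set ε := Real.exp (-(n : ℝ))
  have hε : 0 < ε := Real.exp_pos _
  obtain ⟨F, hF, hcard⟩ := hcover (ENNReal.ofReal ((n : ℝ) ^ α)) η ENNReal.ofReal_ne_top hη
  have hdiam (y : X) : ediam (closedEBall y ((2 * ε).toNNReal)) ≤ ENNReal.ofReal (4 * ε) := by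
    calc ediam (closedEBall y ((2 * ε).toNNReal)) ≤ 2 * ENNReal.ofReal (2 * ε) :=
          ediam_closedEBall_le
      _ = ENNReal.ofReal (4 * ε) := by
        rw [← ENNReal.ofReal_ofNat 2, ← ENNReal.ofReal_mul two_pos.le]
        ring_nf
  refine ⟨F, hF, ?_⟩
  calc ∑ y ∈ F, glogE p β (ediam (closedEBall y ((2 * ε).toNNReal)))
      ≤ F.card * ENNReal.ofReal (4 ^ p * 2 ^ β * (ε ^ p * (n : ℝ) ^ (-β))) := by
        rw [← nsmul_eq_mul]
        exact Finset.sum_le_card_nsmul _ _ _ fun y _ ↦ hgauge _ (hdiam y)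
    _ ≤ ENNReal.ofReal ((n : ℝ) ^ α) * (K * ENNReal.ofReal (ε ^ (-p))) / η *
          ENNReal.ofReal (4 ^ p * 2 ^ β * (ε ^ p * (n : ℝ) ^ (-β))) := by gcongr
    _ = K * η⁻¹ * ENNReal.ofReal (4 ^ p * 2 ^ β) * ENNReal.ofReal ((n : ℝ) ^ (α - β)) := by
      have hnε : (n : ℝ) ^ (α - β) = n ^ α * (ε ^ (-p) * (ε ^ p * (n : ℝ) ^ (-β))) := by
        rw [sub_eq_add_neg, Real.rpow_add hn, Real.rpow_neg hε.le,
          inv_mul_cancel_left₀ (by positivity)]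
      rw [hnε, ENNReal.ofReal_mul (p := (n : ℝ) ^ α) (by positivity),
        ENNReal.ofReal_mul (p := ε ^ (-p)) (by positivity),
        ENNReal.ofReal_mul (p := 4 ^ p * 2 ^ β) (by positivity), div_eq_mul_inv]
      ring

lemma HasPackingGrowth.mkMetric_setOf_limsup_pos_eq_zero [MeasurableSpace X] [BorelSpace X]
    (hA : HasPackingGrowth A p) {α β : ℝ} (hp : 0 ≤ p) (hα : 0 ≤ α) (hαβ : 1 + α < β) :
    Measure.mkMetric (glogE p β) {x | 0 < limsup (fun n : ℕ ↦
      ENNReal.ofReal ((n : ℝ) ^ α) * A x (Real.exp (-(n : ℝ)))) atTop} = 0 := by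
  refine measure_mono_null (setOf_limsup_pos_subset_iUnion_limsup _)
    (measure_iUnion_null fun k ↦ ?_)
  have hk : (k : ℝ≥0∞)⁻¹ ≠ 0 := ENNReal.inv_ne_zero.2 (ENNReal.natCast_ne_top k)
  obtain ⟨K, hK, hcover⟩ := hA.eventually_exists_finset_isCover_sum_glogE_le hp (α := α)
    (β := β) (by linarith) hk
  refine mkMetric_limsup_eq_zero_of_eventually_isCover ?_ ?_ hcover
  · have hexp := (tendsto_exp_neg_natCast_nhdsGT_zero.mono_right nhdsWithin_le_nhds).const_mul 2
    simpa using tendsto_real_toNNReal hexp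
  · rw [ENNReal.tsum_mul_left, ← ENNReal.ofReal_tsum_of_nonneg (fun n ↦ by positivity)
      (Real.summable_nat_rpow.2 (by linarith))]
    finiteness

end PackingGrowth

section Scales

lemma tendsto_natFloor_neg_log_nhdsGT_zero :
    Tendsto (fun ε ↦ ⌊-Real.log ε⌋₊) (𝓝[>] 0) atTop :=
  tendsto_nat_floor_atTop.comp (tendsto_neg_atBot_atTop.comp Real.tendsto_log_nhdsGT_zero)

lemma le_exp_neg_natFloor_neg_log {ε : ℝ} (hε : 0 < ε) (hε1 : ε ≤ 1) :
    ε ≤ Real.exp (-(⌊-Real.log ε⌋₊ : ℝ)) := by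
  rw [← Real.log_le_iff_le_exp hε, le_neg]
  exact Nat.floor_le (neg_nonneg.2 (Real.log_nonpos hε.le hε1))

lemma exp_neg_natFloor_neg_log_le {ε : ℝ} (hε : 0 < ε) :
    Real.exp (-(⌊-Real.log ε⌋₊ : ℝ)) ≤ Real.exp 1 * ε := by
  rw [← Real.le_log_iff_exp_le (by positivity), Real.log_mul (Real.exp_ne_zero 1) hε.ne',
    Real.log_exp]
  linarith [Nat.lt_floor_add_one (-Real.log ε)]

lemma eventually_abs_log_rpow_le {α : ℝ} (hα : 0 ≤ α) :
    ∀ᶠ ε in 𝓝[>] (0 : ℝ), |Real.log ε| ^ α ≤ 2 ^ α * (⌊-Real.log ε⌋₊ : ℝ) ^ α := by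
  filter_upwards [tendsto_natFloor_neg_log_nhdsGT_zero.eventually_ge_atTop 1,
    Ioo_mem_nhdsGT one_pos] with ε hn ⟨hε, hε1⟩
  have hn' : (1 : ℝ) ≤ ⌊-Real.log ε⌋₊ := Nat.one_le_cast.2 hn
  rw [← Real.mul_rpow two_pos.le (by positivity), abs_of_neg (Real.log_neg hε hε1)]
  gcongr
  · exact neg_nonneg.2 (Real.log_neg hε hε1).le
  · linarith [Nat.lt_floor_add_one (-Real.log ε)]

variable {f : ℝ → ℝ≥0∞} {K : ℝ≥0∞} {α : ℝ}

lemma limsup_abs_log_rpow_mul_le (hK : K ≠ ⊤) (hα : 0 ≤ α)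
    (hf : ∀ᶠ ε in 𝓝[>] (0 : ℝ), ∀ η, ε ≤ η → η ≤ Real.exp 1 * ε → f ε ≤ K * f η) :
    limsup (fun ε ↦ ENNReal.ofReal (|Real.log ε| ^ α) * f ε) (𝓝[>] 0) ≤ ENNReal.ofReal (2 ^ α) * K *
      limsup (fun n : ℕ ↦ ENNReal.ofReal ((n : ℝ) ^ α) * f (Real.exp (-(n : ℝ)))) atTop := by
  set g : ℕ → ℝ≥0∞ := fun n ↦ ENNReal.ofReal ((n : ℝ) ^ α) * f (Real.exp (-(n : ℝ)))
  have hle : ∀ᶠ ε in 𝓝[>] (0 : ℝ), ENNReal.ofReal (|Real.log ε| ^ α) * f ε ≤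
      ENNReal.ofReal (2 ^ α) * K * (g ∘ fun ε ↦ ⌊-Real.log ε⌋₊) ε := by
    filter_upwards [Ioc_mem_nhdsGT one_pos, eventually_abs_log_rpow_le hα, hf]
      with ε ⟨hε, hε1⟩ hlog hf
    calc ENNReal.ofReal (|Real.log ε| ^ α) * f ε
        ≤ ENNReal.ofReal (2 ^ α * (⌊-Real.log ε⌋₊ : ℝ) ^ α) *
            (K * f (Real.exp (-(⌊-Real.log ε⌋₊ : ℝ)))) := by
          gcongr
          exact hf _ (le_exp_neg_natFloor_neg_log hε hε1) (exp_neg_natFloor_neg_log_le hε)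
      _ = ENNReal.ofReal (2 ^ α) * K * g ⌊-Real.log ε⌋₊ := by
        rw [ENNReal.ofReal_mul (by positivity)]
        ring
  calc _ ≤ limsup (fun ε ↦ ENNReal.ofReal (2 ^ α) * K * (g ∘ fun ε ↦ ⌊-Real.log ε⌋₊) ε) (𝓝[>] 0) :=
        limsup_le_limsup hle
    _ = ENNReal.ofReal (2 ^ α) * K * limsup (g ∘ fun ε ↦ ⌊-Real.log ε⌋₊) (𝓝[>] 0) :=
        ENNReal.limsup_const_mul_of_ne_top (by finiteness)
    _ ≤ _ := by
      gcongr
      exact tendsto_natFloor_neg_log_nhdsGT_zero.limsup_comp_le_limsup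

lemma limsup_abs_log_rpow_mul_pos_iff (hK : K ≠ ⊤) (hα : 0 ≤ α)
    (hf : ∀ᶠ ε in 𝓝[>] (0 : ℝ), ∀ η, ε ≤ η → η ≤ Real.exp 1 * ε → f ε ≤ K * f η) :
    0 < limsup (fun ε ↦ ENNReal.ofReal (|Real.log ε| ^ α) * f ε) (𝓝[>] 0) ↔
      0 < limsup (fun n : ℕ ↦ ENNReal.ofReal ((n : ℝ) ^ α) * f (Real.exp (-(n : ℝ)))) atTop := by
  refine ⟨fun hpos ↦ pos_of_ne_zero <|
    right_ne_zero_of_mul (hpos.trans_le (limsup_abs_log_rpow_mul_le hK hα hf)).ne',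
    fun hpos ↦ hpos.trans_le ?_⟩
  simpa [Function.comp_def] using tendsto_exp_neg_natCast_nhdsGT_zero.limsup_comp_le_limsup
    (u := fun ε ↦ ENNReal.ofReal (|Real.log ε| ^ α) * f ε)

end Scales

section Doubling

variable {X : Type*} [MetricSpace X] [MeasurableSpace X] {μ : Measure X} {W : X → X → ℝ≥0∞}

lemma doubleAvg_le_of_measure_closedBall_le {x : X} {ε η : ℝ} {C : ℝ≥0} (hC : C ≠ 0)
    (hεη : ε ≤ η) (hμ : μ (closedBall x η) ≤ C * μ (closedBall x ε)) :
    doubleAvg μ W x ε ≤ C ^ 2 * doubleAvg μ W x η := by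
  have hC' : (C : ℝ≥0∞) ≠ 0 := ENNReal.coe_ne_zero.2 hC
  have hinv : (μ (closedBall x ε))⁻¹ ≤ C * (μ (closedBall x η))⁻¹ := by
    rw [← ENNReal.inv_mul_le_iff hC' ENNReal.coe_ne_top,
      ← ENNReal.mul_inv (.inl hC') (.inl ENNReal.coe_ne_top)]
    exact ENNReal.inv_le_inv.2 hμ
  have hsub : closedBall x ε ⊆ closedBall x η := closedBall_subset_closedBall hεη
  calc doubleAvg μ W x ε
      ≤ C * (μ (closedBall x η))⁻¹ * (C * (μ (closedBall x η))⁻¹) *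
          ∫⁻ z in closedBall x η, ∫⁻ y in closedBall x η, W z y ∂μ ∂μ := by
        unfold doubleAvg
        gcongr
    _ = C ^ 2 * doubleAvg μ W x η := by
      unfold doubleAvg
      ring

/-- The exceptional set `D_α` of a kernel `W`: the points at which the double averages of `W` over
balls of radius `ε` are not `o(|log ε| ^ (-α))` as `ε → 0⁺`. A map `u` gives the kernel
`W z y = ρ(u z, u y) ^ q`. -/
def logOscillationSet (μ : Measure X) (W : X → X → ℝ≥0∞) (α : ℝ) : Set X :=
  {x | 0 < limsup (fun ε : ℝ ↦ ENNReal.ofReal (|Real.log ε| ^ α) * doubleAvg μ W x ε) (𝓝[>] 0)}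

lemma logOscillationSet_eq_setOf_limsup_exp_neg_pos [IsUnifLocDoublingMeasure μ] {α : ℝ}
    (hα : 0 ≤ α) :
    logOscillationSet μ W α = {x | 0 < limsup (fun n : ℕ ↦
      ENNReal.ofReal ((n : ℝ) ^ α) * doubleAvg μ W x (Real.exp (-(n : ℝ)))) atTop} := by
  ext x
  set C := IsUnifLocDoublingMeasure.scalingConstantOf μ (Real.exp 1)
  have hC : C ≠ 0 :=
    (zero_lt_one.trans_le (IsUnifLocDoublingMeasure.one_le_scalingConstantOf μ _)).ne'
  obtain ⟨R, hR, hdoubling⟩ :=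
    IsUnifLocDoublingMeasure.eventually_measure_mul_le_scalingConstantOf_mul μ (Real.exp 1)
  refine limsup_abs_log_rpow_mul_pos_iff (K := (C : ℝ≥0∞) ^ 2) (by finiteness) hα ?_
  filter_upwards [Ioc_mem_nhdsGT hR] with ε ⟨hε, hεR⟩ η hεη hη
  refine doubleAvg_le_of_measure_closedBall_le hC hεη ?_
  have hη0 : 0 < η := hε.trans_le hεη
  simpa [div_mul_cancel₀ η hε.ne'] using
    hdoubling x (η / ε) ε ⟨by positivity, (div_le_iff₀ hε).2 hη⟩ hεR

end Doubling

section Ahlfors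

variable {X : Type*} [MetricSpace X] [MeasurableSpace X] {μ : Measure X} {s : ℝ}

lemma IsAhlfors.eventually_measure_closedBall [Nontrivial X] (hμ : IsAhlfors μ s) :
    ∃ c C : ℝ, 0 < c ∧ 0 < C ∧ ∀ᶠ ε in 𝓝[>] (0 : ℝ), ∀ x,
      ENNReal.ofReal (c * ε ^ s) ≤ μ (closedBall x ε) ∧
        μ (closedBall x ε) ≤ ENNReal.ofReal (C * ε ^ s) := by
  obtain ⟨c, C, hc, hC, hμ⟩ := hμ
  refine ⟨c, C, hc, hC, ?_⟩
  have hdiam : 0 < ediam (univ : Set X) := ediam_pos_iff.2 nontrivial_univ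
  have hofReal : Tendsto ENNReal.ofReal (𝓝[>] 0) (𝓝 0) := by
    simpa using ENNReal.tendsto_ofReal (tendsto_id.mono_left (nhdsWithin_le_nhds (a := (0 : ℝ))))
  filter_upwards [self_mem_nhdsWithin, hofReal.eventually_lt_const hdiam] with ε hε hεd x
  exact hμ x ε hε hεd

lemma IsAhlfors.isUnifLocDoublingMeasure (hμ : IsAhlfors μ s) : IsUnifLocDoublingMeasure μ := by
  rcases subsingleton_or_nontrivial X with _ | _
  · refine ⟨1, eventually_nhdsWithin_of_forall fun ε (hε : 0 < ε) x ↦ ?_⟩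
    have hball {ρ : ℝ} (hρ : 0 < ρ) : closedBall x ρ = univ :=
      Subsingleton.eq_univ_of_nonempty (nonempty_closedBall.2 hρ.le)
    simp [hball hε, hball (mul_pos two_pos hε)]
  obtain ⟨c, C, hc, hC, hμ⟩ := hμ.eventually_measure_closedBall
  refine ⟨(2 ^ s * C / c).toNNReal, ?_⟩
  filter_upwards [self_mem_nhdsWithin, hμ, eventually_nhdsGT_zero_mul_left two_pos hμ]
    with ε (hε : 0 < ε) hμε hμ2ε x
  calc μ (closedBall x (2 * ε)) ≤ ENNReal.ofReal (C * (2 * ε) ^ s) := (hμ2ε x).2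
    _ = ENNReal.ofReal (2 ^ s * C / c) * ENNReal.ofReal (c * ε ^ s) := by
      rw [← ENNReal.ofReal_mul (by positivity), Real.mul_rpow two_pos.le hε.le]
      field_simp
    _ ≤ ENNReal.ofReal (2 ^ s * C / c) * μ (closedBall x ε) := by
      gcongr
      exact (hμε x).1

end Ahlfors

section Energy

lemma pairwiseDisjoint_closedBall_of_isSeparated {X : Type*} [PseudoMetricSpace X] {ε : ℝ}
    {S : Set X} (hS : IsSeparated (ENNReal.ofReal (2 * ε)) S) :
    S.PairwiseDisjoint (closedBall · ε) := by
  intro x hx y hy hxy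
  have hdist : ENNReal.ofReal (2 * ε) < ENNReal.ofReal (dist x y) := edist_dist x y ▸ hS hx hy hxy
  exact closedBall_disjoint_closedBall (by linarith [(ENNReal.ofReal_lt_ofReal_iff'.1 hdist).1])

variable {X : Type*} [MetricSpace X] [MeasurableSpace X] {μ : Measure X} {W : X → X → ℝ≥0∞}

/-- The Besov energy of order `σ` of a kernel `W`. For `W x z = ρ(u x, u z) ^ q` and `σ = r * q` it
is the `q`-th power of the seminorm of `u` in `B^r_{q,∞}(X, μ; Y)`. -/
noncomputable def besovEnergy (μ : Measure X) (W : X → X → ℝ≥0∞) (σ : ℝ) : ℝ≥0∞ :=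
  ⨆ (t : ℝ) (_ : 0 < t), ∫⁻ x, (ENNReal.ofReal t ^ σ)⁻¹ *
    ((μ (closedBall x t))⁻¹ * ∫⁻ z in closedBall x t, W x z ∂μ) ∂μ

lemma lintegral_average_closedBall_le_rpow_mul_besovEnergy {t : ℝ} (ht : 0 < t) (σ : ℝ) :
    ∫⁻ x, (μ (closedBall x t))⁻¹ * ∫⁻ z in closedBall x t, W x z ∂μ ∂μ ≤
      ENNReal.ofReal (t ^ σ) * besovEnergy μ W σ := by
  have hpow : 0 < ENNReal.ofReal (t ^ σ) := ENNReal.ofReal_pos.2 (by positivity)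
  rw [← ENNReal.inv_mul_le_iff hpow.ne' ENNReal.ofReal_ne_top,
    ← lintegral_const_mul' _ _ (ENNReal.inv_ne_top.2 hpow.ne'), ← ENNReal.ofReal_rpow_of_pos ht]
  exact le_iSup₂_of_le t ht le_rfl

variable {M L : ℝ≥0∞} {ε : ℝ}

lemma lintegral_lintegral_closedBall_le [OpensMeasurableSpace X] (hM0 : M ≠ 0) (hM : M ≠ ⊤)
    (hμ : ∀ z, μ (closedBall z (2 * ε)) ≤ M) (x : X) :
    ∫⁻ z in closedBall x ε, ∫⁻ y in closedBall x ε, W z y ∂μ ∂μ ≤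
      M * ∫⁻ z in closedBall x ε,
        (μ (closedBall z (2 * ε)))⁻¹ * ∫⁻ y in closedBall z (2 * ε), W z y ∂μ ∂μ := by
  rw [← lintegral_const_mul' _ _ hM]
  refine setLIntegral_mono' measurableSet_closedBall fun z hz ↦ ?_
  have hsub : closedBall x ε ⊆ closedBall z (2 * ε) :=
    closedBall_subset_closedBall' (by linarith [mem_closedBall'.1 hz])
  calc ∫⁻ y in closedBall x ε, W z y ∂μ
      ≤ M * (M⁻¹ * ∫⁻ y in closedBall z (2 * ε), W z y ∂μ) := by
        rw [ENNReal.mul_inv_cancel_left hM0 hM]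
        exact lintegral_mono_set hsub
    _ ≤ _ := by
      gcongr
      exact hμ z

lemma sum_doubleAvg_le [OpensMeasurableSpace X] (hM0 : M ≠ 0) (hM : M ≠ ⊤)
    (hμL : ∀ z, L ≤ μ (closedBall z ε)) (hμM : ∀ z, μ (closedBall z (2 * ε)) ≤ M) {F : Finset X}
    (hF : (F : Set X).PairwiseDisjoint (closedBall · ε)) :
    ∑ x ∈ F, doubleAvg μ W x ε ≤ L⁻¹ * L⁻¹ * (M *
      ∫⁻ z, (μ (closedBall z (2 * ε)))⁻¹ * ∫⁻ y in closedBall z (2 * ε), W z y ∂μ ∂μ) := by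
  set G : X → ℝ≥0∞ := fun z ↦
    (μ (closedBall z (2 * ε)))⁻¹ * ∫⁻ y in closedBall z (2 * ε), W z y ∂μ
  calc ∑ x ∈ F, doubleAvg μ W x ε
      ≤ ∑ x ∈ F, L⁻¹ * L⁻¹ * (M * ∫⁻ z in closedBall x ε, G z ∂μ) := by
        unfold doubleAvg
        gcongr with x
        · exact hμL x
        · exact hμL x
        · exact lintegral_lintegral_closedBall_le hM0 hM hμM x
    _ = L⁻¹ * L⁻¹ * (M * ∫⁻ z in ⋃ x ∈ F, closedBall x ε, G z ∂μ) := by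
      rw [lintegral_biUnion_finset hF (fun _ _ ↦ measurableSet_closedBall), Finset.mul_sum,
        Finset.mul_sum]
    _ ≤ _ := by
      gcongr _ * (_ * ?_)
      exact setLIntegral_le_lintegral _ _

variable {s σ : ℝ}

lemma IsAhlfors.hasPackingGrowth_doubleAvg [OpensMeasurableSpace X] [Nontrivial X]
    (hμ : IsAhlfors μ s) (hW : besovEnergy μ W σ ≠ ⊤) :
    HasPackingGrowth (doubleAvg μ W) (s - σ) := by
  obtain ⟨c, C, hc, hC, hμ⟩ := hμ.eventually_measure_closedBall
  refine ⟨ENNReal.ofReal (2 ^ s * C * 2 ^ σ / c ^ 2) * besovEnergy μ W σ, by finiteness, ?_⟩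
  filter_upwards [self_mem_nhdsWithin, hμ, eventually_nhdsGT_zero_mul_left two_pos hμ]
    with ε (hε : 0 < ε) hμε hμ2ε F hF
  have hM : 0 < ENNReal.ofReal (C * (2 * ε) ^ s) := ENNReal.ofReal_pos.2 (by positivity)
  calc ∑ x ∈ F, doubleAvg μ W x ε
      ≤ (ENNReal.ofReal (c * ε ^ s))⁻¹ * (ENNReal.ofReal (c * ε ^ s))⁻¹ *
          (ENNReal.ofReal (C * (2 * ε) ^ s) *
            ∫⁻ z, (μ (closedBall z (2 * ε)))⁻¹ * ∫⁻ y in closedBall z (2 * ε), W z y ∂μ ∂μ) :=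
        sum_doubleAvg_le hM.ne' ENNReal.ofReal_ne_top (fun z ↦ (hμε z).1) (fun z ↦ (hμ2ε z).2)
          (pairwiseDisjoint_closedBall_of_isSeparated hF)
    _ ≤ (ENNReal.ofReal (c * ε ^ s))⁻¹ * (ENNReal.ofReal (c * ε ^ s))⁻¹ *
          (ENNReal.ofReal (C * (2 * ε) ^ s) *
            (ENNReal.ofReal ((2 * ε) ^ σ) * besovEnergy μ W σ)) := by
      gcongr
      exact lintegral_average_closedBall_le_rpow_mul_besovEnergy (by positivity) σ
    _ = ENNReal.ofReal ((c * ε ^ s)⁻¹ * ((c * ε ^ s)⁻¹ * (C * (2 * ε) ^ s * (2 * ε) ^ σ))) *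
          besovEnergy μ W σ := by
      rw [ENNReal.ofReal_mul (p := (c * ε ^ s)⁻¹) (by positivity),
        ENNReal.ofReal_mul (p := (c * ε ^ s)⁻¹) (by positivity),
        ENNReal.ofReal_mul (p := C * (2 * ε) ^ s) (by positivity),
        ENNReal.ofReal_inv_of_pos (by positivity)]
      simp only [mul_assoc]
    _ = ENNReal.ofReal (2 ^ s * C * 2 ^ σ / c ^ 2 * ε ^ (-(s - σ))) * besovEnergy μ W σ := by
      congr 2
      rw [Real.mul_rpow two_pos.le hε.le, Real.mul_rpow two_pos.le hε.le, neg_sub,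
        Real.rpow_sub hε]
      field_simp
    _ = _ := by
      rw [ENNReal.ofReal_mul (by positivity)]
      ring

end Energy

section LogOscillation

variable {X : Type*} [MetricSpace X] [MeasurableSpace X] [BorelSpace X] {μ : Measure X}
  {W : X → X → ℝ≥0∞} {s σ : ℝ}

lemma IsAhlfors.mkMetric_logOscillationSet_eq_zero (hμ : IsAhlfors μ s) (hσ : σ ≤ s)
    (hW : besovEnergy μ W σ ≠ ⊤) {α β : ℝ} (hα : 0 ≤ α) (hαβ : 1 + α < β) :
    Measure.mkMetric (glogE (s - σ) β) (logOscillationSet μ W α) = 0 := by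
  rcases subsingleton_or_nontrivial X with _ | _
  · exact mkMetric_eq_zero_of_subsingleton (by simp [glogE]) subsingleton_of_subsingleton
  have := hμ.isUnifLocDoublingMeasure
  rw [logOscillationSet_eq_setOf_limsup_exp_neg_pos hα]
  exact (hμ.hasPackingGrowth_doubleAvg hW).mkMetric_setOf_limsup_pos_eq_zero (sub_nonneg.2 hσ) hα
    hαβ

end LogOscillation

theorem statement17_general {X : Type*} [MetricSpace X] [MeasurableSpace X] [BorelSpace X]
    {μ : Measure X} {s σ α : ℝ} (hμ : IsAhlfors μ s) (hσ : σ ≤ s) {W : X → X → ℝ≥0∞}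
    (hW : besovEnergy μ W σ ≠ ⊤) (hα : 0 ≤ α) :
    logOscillationSet μ W α = {x | 0 < limsup (fun n : ℕ ↦
      ENNReal.ofReal ((n : ℝ) ^ α) * doubleAvg μ W x (Real.exp (-(n : ℝ)))) atTop} ∧
    (∀ β, 1 + α < β → logHausdorff (s - σ) β (logOscillationSet μ W α) = 0) ∧
    dimH (logOscillationSet μ W α) ≤ ENNReal.ofReal (s - σ) := by
  have hnull {β : ℝ} (hβ : 1 + α < β) :=
    hμ.mkMetric_logOscillationSet_eq_zero hσ hW hα hβ
  have := hμ.isUnifLocDoublingMeasure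
  refine ⟨logOscillationSet_eq_setOf_limsup_exp_neg_pos hα, fun β hβ ↦ ?_, ?_⟩
  · exact le_antisymm ((logHausdorff_le_mkMetric _).trans_eq (hnull hβ)) zero_le
  · exact dimH_le_of_mkMetric_glogE_eq_zero (sub_nonneg.2 hσ) (hnull (lt_add_one (1 + α)))

/-- For a Besov function `u ∈ B^r_{q,∞}`, the set `D_α` of points where
`limsup_{ε→0⁺} |ln ε|^α ⨍⨍_{B_ε(x)} ρ(u z, u y)^q > 0` equals its sequential version
along `ε_n = e^{-n}`; it is `Λ^{s-rq,β}`-null whenever `β > 1 + α`, and its Hausdorff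
dimension is at most `s - rq`. -/
theorem statement17 {X Y : Type*} [MetricSpace X] [MeasurableSpace X] [BorelSpace X]
    [MetricSpace Y] [MeasurableSpace Y] [BorelSpace Y]
    (μ : Measure X) (s r q : ℝ) (hs : 0 < s)
    (hμ : IsAhlfors μ s) (hr0 : 0 ≤ r) (hr1 : r ≤ 1) (hq : 0 < q) (hrq : r * q ≤ s)
    (u : X → Y) (hu : MemBesov μ r q u) (α : ℝ) (hα : 0 ≤ α) :
    {x : X | 0 < limsup (fun ε : ℝ => ENNReal.ofReal (|Real.log ε| ^ α) *
        doubleAvg μ (fun z y => edist (u z) (u y) ^ q) x ε) (𝓝[>] (0 : ℝ))}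
      = {x : X | 0 < limsup (fun n : ℕ => ENNReal.ofReal ((n : ℝ) ^ α) *
        doubleAvg μ (fun z y => edist (u z) (u y) ^ q) x (Real.exp (-(n : ℝ)))) atTop} ∧
    (∀ β : ℝ, 1 + α < β →
      logHausdorff (s - r * q) β
        {x : X | 0 < limsup (fun ε : ℝ => ENNReal.ofReal (|Real.log ε| ^ α) *
          doubleAvg μ (fun z y => edist (u z) (u y) ^ q) x ε) (𝓝[>] (0 : ℝ))} = 0) ∧
    dimH {x : X | 0 < limsup (fun ε : ℝ => ENNReal.ofReal (|Real.log ε| ^ α) *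
        doubleAvg μ (fun z y => edist (u z) (u y) ^ q) x ε) (𝓝[>] (0 : ℝ))}
      ≤ ENNReal.ofReal (s - r * q) :=
  statement17_general hμ hrq hu.2.2.ne hα
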